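/- arXiv:math/0210152 — 8 statements merged into one kernel-verified Lean document; each statement's English description precedes it below -/
import Mathlib

section
/- Let V be a finite-dimensional real vector space, L ⊆ V ⊕ V* a linear Dirac structure, and W ⊆ V a subspace. Then the restriction L_W = {(v, ξ|_W) : (v, ξ) ∈ L, v ∈ W} ⊆ W ⊕ W* is a linear Dirac structure on W. -/
/-!
A Lagrangian `L ⊆ V ⊕ V*` with projection `E` to `V` contains `0 ⊕ E°`. If `(w, η)` is orthogonal
to `L_W`, then pairing it with the elements `(0, ξ|_W)`, `ξ ∈ E°`, gives `w ∈ E°° = E`, say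
`(w, ξ) ∈ L`, and pairing it with the rest of `L_W` shows that `ξ` and `η` agree on `W ∩ E`. Hence
`ξ|_W - η` extends to some `θ ∈ E°`, and `(w, η)` is the restriction of `(w, ξ - θ) ∈ L`. The same
argument pulls `L` back along any linear map. In finite dimension, Lagrangian means isotropic of
dimension `dim V`.
-/

open Module

section Pairing

variable (R M : Type*) [CommSemiring R] [AddCommMonoid M] [Module R M]

/-- The canonical symmetric pairing on `M ⊕ M*`, without the factor `1 / 2` so that it makes sense
in every characteristic. It is `LinearMap.dualProd` with the two summands exchanged. -/
def diracPairing : LinearMap.BilinForm R (M × Dual R M) :=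
  LinearMap.BilinForm.congr (LinearEquiv.prodComm R (Dual R M) M) (LinearMap.dualProd R M)

end Pairing

theorem nondegenerate_diracPairing (R M : Type*) [CommRing R] [AddCommGroup M] [Module R M]
    [Projective R M] : (diracPairing R M).Nondegenerate := by
  refine LinearMap.BilinForm.Nondegenerate.congr _ ?_
  refine (LinearMap.isSymm_dualProd R M).isRefl.nondegenerate_iff_separatingLeft.mpr ?_
  exact (LinearMap.separatingLeft_dualProd R M).mpr (eval_apply_injective R)

section LinearDirac

variable {R M N : Type*} [CommSemiring R] [AddCommMonoid M] [Module R M]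
  [AddCommMonoid N] [Module R N]

theorem mem_orthogonal_diracPairing {L : Submodule R (M × Dual R M)} {q : M × Dual R M} :
    q ∈ (diracPairing R M).orthogonal L ↔ ∀ p ∈ L, p.2 q.1 + q.2 p.1 = 0 :=
  forall₂_congr fun p _ => by rw [add_comm]; rfl

/-- Linear Dirac structures, encoded as Lagrangian submodules: those equal to their own orthogonal.
This makes sense in every dimension; `isLinearDirac_iff_isotropic_and_finrank_eq` recovers the
definition by isotropy and dimension. -/
def IsLinearDirac (L : Submodule R (M × Dual R M)) : Prop :=
  (diracPairing R M).orthogonal L = L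

theorem isLinearDirac_iff {L : Submodule R (M × Dual R M)} :
    IsLinearDirac L ↔ ∀ q, (∀ p ∈ L, p.2 q.1 + q.2 p.1 = 0) ↔ q ∈ L := by
  simp only [IsLinearDirac, SetLike.ext_iff, mem_orthogonal_diracPairing]

theorem mem_map_fst {L : Submodule R (M × Dual R M)} {x : M} :
    x ∈ L.map (LinearMap.fst R M (Dual R M)) ↔ ∃ ξ, (x, ξ) ∈ L := by
  simp

theorem IsLinearDirac.zero_prod_mem {L : Submodule R (M × Dual R M)} (hL : IsLinearDirac L)
    {ξ : Dual R M} (hξ : ξ ∈ (L.map (LinearMap.fst R M (Dual R M))).dualAnnihilator) :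
    (0, ξ) ∈ L := by
  refine (isLinearDirac_iff.mp hL _).mp fun p hp => ?_
  simpa using (Submodule.mem_dualAnnihilator ξ).mp hξ p.1 ⟨p, hp, rfl⟩

/-- The backward image (pullback) `{(x, f* ξ) | (f x, ξ) ∈ L}` of `L` along `f`. The restriction of
`L` to a submodule `W` is its backward image along the inclusion `W.subtype`. -/
def backwardImage (f : M →ₗ[R] N) (L : Submodule R (N × Dual R N)) :
    Submodule R (M × Dual R M) :=
  (L.comap (f.prodMap LinearMap.id)).map (LinearMap.id.prodMap f.dualMap)

theorem mem_backwardImage {f : M →ₗ[R] N} {L : Submodule R (N × Dual R N)} {x : M}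
    {η : Dual R M} : (x, η) ∈ backwardImage f L ↔ ∃ ξ, (f x, ξ) ∈ L ∧ f.dualMap ξ = η := by
  simp [backwardImage]

end LinearDirac

theorem coe_backwardImage_subtype {R M : Type*} [CommSemiring R] [AddCommMonoid M] [Module R M]
    (L : Submodule R (M × Dual R M)) (W : Submodule R M) :
    (backwardImage W.subtype L : Set (W × Dual R W)) =
      {q | ∃ p ∈ L, ∃ h : p.1 ∈ W, q = (⟨p.1, h⟩, W.subtype.dualMap p.2)} := by
  ext ⟨w, η⟩
  refine mem_backwardImage.trans ⟨?_, ?_⟩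
  · rintro ⟨ξ, hξ, rfl⟩
    exact ⟨(w, ξ), hξ, w.2, rfl⟩
  · rintro ⟨p, hp, _, hq⟩
    obtain ⟨rfl, rfl⟩ := Prod.ext_iff.mp hq
    exact ⟨p.2, hp, rfl⟩

section Field

variable {K U V : Type*} [Field K] [AddCommGroup U] [Module K U] [AddCommGroup V] [Module K V]

theorem dualAnnihilator_map_dualMap_eq (f : U →ₗ[K] V) (E : Submodule K V) :
    E.dualAnnihilator.map f.dualMap = (E.comap f).dualAnnihilator := by
  rw [← E.range_dualMap_mkQ_eq, ← LinearMap.range_comp, LinearMap.dualMap_comp_dualMap,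
    LinearMap.range_dualMap_eq_dualAnnihilator_ker, LinearMap.ker_comp, E.ker_mkQ]

theorem isLinearDirac_iff_isotropic_and_finrank_eq [FiniteDimensional K V]
    {L : Submodule K (V × Dual K V)} :
    IsLinearDirac L ↔
      (∀ p ∈ L, ∀ q ∈ L, p.2 q.1 + q.2 p.1 = 0) ∧ finrank K L = finrank K V := by
  have hrank : finrank K ((diracPairing K V).orthogonal L) = 2 * finrank K V - finrank K L := by
    rw [LinearMap.BilinForm.finrank_orthogonal (nondegenerate_diracPairing K V),
      finrank_prod, Subspace.dual_finrank_eq, two_mul]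
  constructor
  · intro hL
    refine ⟨fun p hp q hq => (isLinearDirac_iff.mp hL q).mpr hq p hp, ?_⟩
    rw [hL] at hrank
    lia
  · rintro ⟨hiso, hdim⟩
    have hle : L ≤ (diracPairing K V).orthogonal L := fun q hq =>
      mem_orthogonal_diracPairing.mpr fun p hp => hiso p hp q hq
    refine (Submodule.eq_of_le_of_finrank_eq hle ?_).symm
    rw [hrank, hdim, two_mul, Nat.add_sub_cancel]

theorem restriction_of_linear_dirac_structure_is_linear_dirac_structure_general
    (L : Submodule K (V × Dual K V)) (hL : IsLinearDirac L) (f : U →ₗ[K] V) :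
    IsLinearDirac (backwardImage f L) := by
  have hL_iff := isLinearDirac_iff.mp hL
  let E := L.map (LinearMap.fst K V (Dual K V))
  refine isLinearDirac_iff.mpr fun ⟨u, η⟩ => ⟨fun hort => ?_, ?_⟩
  · have hpair {u' : U} {ξ' : Dual K V} (hξ' : (f u', ξ') ∈ L) : ξ' (f u) + η u' = 0 :=
      hort (u', f.dualMap ξ') (mem_backwardImage.mpr ⟨ξ', hξ', rfl⟩)
    have hfu : f u ∈ E := by
      refine (Subspace.forall_mem_dualAnnihilator_apply_eq_zero_iff E _).mp fun ξ' hξ' => ?_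
      simpa using hpair (u' := 0) (by simpa using hL.zero_prod_mem hξ')
    obtain ⟨ξ, hξ⟩ := mem_map_fst.mp hfu
    have hagree : f.dualMap ξ - η ∈ (E.comap f).dualAnnihilator := by
      refine (Submodule.mem_dualAnnihilator _).mpr fun u' hu' => ?_
      obtain ⟨ξ', hξ'⟩ := mem_map_fst.mp hu'
      have hiso : ξ' (f u) + ξ (f u') = 0 := (hL_iff (f u, ξ)).mpr hξ (f u', ξ') hξ'
      exact sub_eq_zero.mpr (add_left_cancel (hiso.trans (hpair hξ').symm))
    rw [← dualAnnihilator_map_dualMap_eq] at hagree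
    obtain ⟨θ, hθ, hfθ⟩ := hagree
    have hmem : (f u, ξ - θ) ∈ L := by simpa using L.sub_mem hξ (hL.zero_prod_mem hθ)
    exact mem_backwardImage.mpr ⟨ξ - θ, hmem, by rw [map_sub, hfθ, sub_sub_cancel]⟩
  · rintro hu ⟨u', η'⟩ hu'
    obtain ⟨ξ, hξ, rfl⟩ := mem_backwardImage.mp hu
    obtain ⟨ξ', hξ', rfl⟩ := mem_backwardImage.mp hu'
    exact (hL_iff (f u, ξ)).mpr hξ (f u', ξ') hξ'

end Field

/-- Let `V` be a finite-dimensional real vector space, `L ⊆ V ⊕ V*` a linear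
Dirac structure, and `W ⊆ V` a subspace.  Then the restriction
`L_W = {(v, ξ|_W) : (v, ξ) ∈ L, v ∈ W} ⊆ W ⊕ W*` is a linear Dirac structure on `W`:
it is a linear subspace of `W ⊕ W*` which is isotropic for the canonical symmetric pairing
and has dimension `dim W`. -/
theorem restriction_of_linear_dirac_structure_is_linear_dirac_structure
    {V : Type*} [AddCommGroup V] [Module ℝ V] [FiniteDimensional ℝ V]
    (L : Submodule ℝ (V × Dual ℝ V))
    (hiso : ∀ p ∈ L, ∀ q ∈ L, (p.2 q.1 + q.2 p.1) / 2 = 0)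
    (hdim : finrank ℝ L = finrank ℝ V)
    (W : Submodule ℝ V) :
    ∃ LW : Submodule ℝ (W × Dual ℝ W),
      (LW : Set (W × Dual ℝ W)) =
        {q | ∃ p ∈ L, ∃ h : p.1 ∈ W, q = (⟨p.1, h⟩, W.subtype.dualMap p.2)} ∧
      (∀ p ∈ LW, ∀ q ∈ LW, (p.2 q.1 + q.2 p.1) / 2 = 0) ∧
      finrank ℝ LW = finrank ℝ W := by
  have hLW := restriction_of_linear_dirac_structure_is_linear_dirac_structure_general L
    (isLinearDirac_iff_isotropic_and_finrank_eq.mpr ⟨by simpa using hiso, hdim⟩) W.subtype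
  obtain ⟨hiso', hdim'⟩ := isLinearDirac_iff_isotropic_and_finrank_eq.mp hLW
  exact ⟨_, coe_backwardImage_subtype L W, by simpa using hiso', hdim'⟩
end

section
/- Let V be a finite-dimensional real vector space, Π a bivector on V, and W ⊆ V a Poisson-Dirac subspace. Then the restriction map A_W → W*, ξ ↦ ξ|_W, is surjective and its kernel equals W⁰ ∩ ker ♯; in particular W⁰ ∩ A_W = W⁰ ∩ ker ♯, so there is a short exact sequence 0 → W⁰ ∩ ker ♯ → A_W → W* → 0. -/
/-!
If `ξ ∈ W⁰` and `♯ξ ∈ W`, then `♯ξ ∈ W ∩ ♯(W⁰) = 0`; hence `W⁰ ∩ A_W = W⁰ ∩ ker ♯`.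

By duality `W ∩ ♯(W⁰) = 0` gives `W⁰ + (♯(W⁰))⁰ = V*`, and skew-symmetry of the bivector together
with the biduality `W⁰⁰ = W` identifies `(♯(W⁰))⁰` with `A_W`. So `A_W` and the kernel `W⁰` of the
restriction `V* → W*` span `V*`, which makes the restriction of that map to `A_W` surjective.
-/

open Module

lemma inf_comap_eq_inf_ker_of_disjoint_map {R M N : Type*} [Semiring R] [AddCommMonoid M]
    [AddCommMonoid N] [Module R M] [Module R N] (f : M →ₗ[R] N) {p : Submodule R M}
    {q : Submodule R N} (h : Disjoint q (p.map f)) :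
    p ⊓ q.comap f = p ⊓ LinearMap.ker f := by
  refine le_antisymm (le_inf inf_le_left ?_) (inf_le_inf_left p (LinearMap.ker_le_comap f))
  rintro x ⟨hxp, hxq⟩
  exact Submodule.disjoint_def.mp h _ hxq (Submodule.mem_map_of_mem hxp)

lemma dualAnnihilator_map_eq_comap_dualCoannihilator {R M : Type*} [CommSemiring R]
    [AddCommMonoid M] [Module R M] {B : Dual R M →ₗ[R] Dual R M →ₗ[R] R} (hB : B.IsRefl)
    {sharp : Dual R M →ₗ[R] M} (hsharp : ∀ ξ η, η (sharp ξ) = B ξ η)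
    (U : Submodule R (Dual R M)) :
    (U.map sharp).dualAnnihilator = U.dualCoannihilator.comap sharp := by
  ext ξ
  simp only [Submodule.mem_dualAnnihilator, Submodule.mem_map, forall_exists_index, and_imp,
    forall_apply_eq_imp_iff₂, Submodule.mem_comap, Submodule.mem_dualCoannihilator, hsharp]
  exact forall₂_congr fun η _ => hB.eq_iff

section VectorSpace

variable {K V : Type*} [Field K] [AddCommGroup V] [Module K V]

lemma codisjoint_dualAnnihilator_of_disjoint {W W' : Submodule K V} (h : Disjoint W W') :
    Codisjoint W.dualAnnihilator W'.dualAnnihilator := by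
  rw [codisjoint_iff, ← Subspace.dualAnnihilator_inf_eq, h.eq_bot, Submodule.dualAnnihilator_bot]

lemma codisjoint_dualAnnihilator_comap {B : Dual K V →ₗ[K] Dual K V →ₗ[K] K} (hB : B.IsRefl)
    {sharp : Dual K V →ₗ[K] V} (hsharp : ∀ ξ η, η (sharp ξ) = B ξ η) {W : Submodule K V}
    (hW : Disjoint W (W.dualAnnihilator.map sharp)) :
    Codisjoint W.dualAnnihilator (W.comap sharp) := by
  have hA : (W.dualAnnihilator.map sharp).dualAnnihilator = W.comap sharp := by
    rw [dualAnnihilator_map_eq_comap_dualCoannihilator hB hsharp,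
      Subspace.dualAnnihilator_dualCoannihilator_eq]
  exact hA ▸ codisjoint_dualAnnihilator_of_disjoint hW

lemma surjective_dualMap_subtype_domRestrict {W : Submodule K V} {A : Submodule K (Dual K V)}
    (h : Codisjoint W.dualAnnihilator A) :
    Function.Surjective (W.subtype.dualMap.domRestrict A) := by
  have hres : Function.Surjective W.subtype.dualMap :=
    LinearMap.dualMap_surjective_of_injective W.injective_subtype
  exact (LinearMap.surjective_domRestrict_iff hres).mpr h.symm

theorem poisson_dirac_restriction_map_surjective_with_kernel_general
    (B : Dual K V →ₗ[K] Dual K V →ₗ[K] K) (hB : B.IsRefl)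
    (sharp : Dual K V →ₗ[K] V) (hsharp : ∀ ξ η, η (sharp ξ) = B ξ η)
    (W : Submodule K V) (hW : Disjoint W (W.dualAnnihilator.map sharp)) :
    Function.Surjective (W.subtype.dualMap.domRestrict (W.comap sharp)) ∧
    (∀ ξ : W.comap sharp,
      W.subtype.dualMap.domRestrict (W.comap sharp) ξ = 0 ↔
        (ξ : Dual K V) ∈ W.dualAnnihilator ⊓ LinearMap.ker sharp) ∧
    W.dualAnnihilator ⊓ W.comap sharp = W.dualAnnihilator ⊓ LinearMap.ker sharp := by
  have hinf : W.dualAnnihilator ⊓ W.comap sharp = W.dualAnnihilator ⊓ LinearMap.ker sharp :=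
    inf_comap_eq_inf_ker_of_disjoint_map sharp hW
  refine ⟨surjective_dualMap_subtype_domRestrict (codisjoint_dualAnnihilator_comap hB hsharp hW),
    fun ξ => ?_, hinf⟩
  rw [← hinf, Submodule.mem_inf, and_iff_left ξ.2, ← W.dualRestrict_ker_eq_dualAnnihilator,
    LinearMap.mem_ker, W.dualRestrict_def, LinearMap.domRestrict_apply]

end VectorSpace

/-- Let `V` be a finite-dimensional real vector space, `Π` a bivector on `V`
(with induced `♯ : V* → V`), and `W ⊆ V` a Poisson-Dirac subspace (`W ∩ ♯(W⁰) = {0}`).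
Then the restriction map `A_W → W*`, `ξ ↦ ξ|_W`, is surjective and its kernel is
`W⁰ ∩ ker ♯`; in particular `W⁰ ∩ A_W = W⁰ ∩ ker ♯`, so there is a short exact sequence
`0 → W⁰ ∩ ker ♯ → A_W → W* → 0`. -/
theorem poisson_dirac_restriction_map_surjective_with_kernel
    {V : Type*} [AddCommGroup V] [Module ℝ V] [FiniteDimensional ℝ V]
    (Pi : Dual ℝ V →ₗ[ℝ] Dual ℝ V →ₗ[ℝ] ℝ) (hPi : ∀ ξ, Pi ξ ξ = 0)
    (sharp : Dual ℝ V →ₗ[ℝ] V) (hsharp : ∀ ξ η, η (sharp ξ) = Pi ξ η)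
    (W : Submodule ℝ V)
    (hPD : W ⊓ Submodule.map sharp W.dualAnnihilator = ⊥) :
    Function.Surjective (W.subtype.dualMap.domRestrict (Submodule.comap sharp W)) ∧
    (∀ ξ : Submodule.comap sharp W,
      W.subtype.dualMap.domRestrict (Submodule.comap sharp W) ξ = 0 ↔
        (ξ : Dual ℝ V) ∈ W.dualAnnihilator ⊓ LinearMap.ker sharp) ∧
    W.dualAnnihilator ⊓ Submodule.comap sharp W =
      W.dualAnnihilator ⊓ LinearMap.ker sharp := by
  exact poisson_dirac_restriction_map_surjective_with_kernel_general Pi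
    (LinearMap.IsAlt.isRefl hPi) sharp hsharp W (disjoint_iff.mpr hPD)
end

section
/- Let V be a finite-dimensional real vector space, Π a bivector on V, and W ⊆ V a Poisson-Dirac subspace. Then there exists a unique alternating bilinear form Π_W on W* such that Π_W(ξ|_W, η|_W) = Π(ξ, η) for all ξ, η ∈ A_W. (In particular, for ξ, η ∈ A_W the value Π(ξ, η) depends only on the restrictions ξ|_W and η|_W.) -/
open Module

/-!
Since `Π` is skew, `A_W` is the annihilator of `♯(W⁰)`, so `W ∩ ♯(W⁰) = 0` dualizes to
`A_W + W⁰ = V*`: restriction to `W` maps `A_W` onto `W*`. As `Π(ξ, η) = η(♯ξ)` vanishes for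
`ξ ∈ A_W` and `η ∈ W⁰`, the restriction of `Π` to `A_W` descends uniquely along this surjection.
-/

section Descent

variable {M M₁ M₂ N N₁ N₂ P : Type*}

theorem exists_comp_eq_of_factorsThrough {R : Type*} [Semiring R] [AddCommMonoid M] [Module R M]
    [AddCommMonoid N] [Module R N] [AddCommMonoid P] [Module R P]
    {f : M →ₗ[R] N} {φ : M →ₗ[R] P} (hf : Function.Surjective f)
    (hφ : Function.FactorsThrough φ f) : ∃ ψ : N →ₗ[R] P, ψ ∘ₗ f = φ := by
  have apply_surjInv (x) : φ (Function.surjInv hf (f x)) = φ x := hφ (Function.surjInv_eq hf (f x))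
  let ψ : N →ₗ[R] P :=
    { toFun := fun u ↦ φ (Function.surjInv hf u)
      map_add' := hf.forall₂.mpr fun x y ↦ by simp only [← map_add, apply_surjInv]
      map_smul' := fun c ↦ hf.forall.mpr fun x ↦ by
        simp only [← map_smul, apply_surjInv, RingHom.id_apply] }
  exact ⟨ψ, LinearMap.ext apply_surjInv⟩

theorem existsUnique_compl₁₂_eq_of_factorsThrough {R : Type*} [CommSemiring R]
    [AddCommMonoid M₁] [Module R M₁] [AddCommMonoid M₂] [Module R M₂]
    [AddCommMonoid N₁] [Module R N₁] [AddCommMonoid N₂] [Module R N₂]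
    [AddCommMonoid P] [Module R P] {B : M₁ →ₗ[R] M₂ →ₗ[R] P}
    {f : M₁ →ₗ[R] N₁} {g : M₂ →ₗ[R] N₂}
    (hf : Function.Surjective f) (hg : Function.Surjective g)
    (hfB : Function.FactorsThrough B f) (hgB : Function.FactorsThrough B.flip g) :
    ∃! B' : N₁ →ₗ[R] N₂ →ₗ[R] P, B'.compl₁₂ f g = B := by
  obtain ⟨C, rfl⟩ := exists_comp_eq_of_factorsThrough hf hfB
  have hgC : Function.FactorsThrough C.flip g := fun y y' h ↦
    LinearMap.ext <| hf.forall.mpr <| LinearMap.congr_fun (hgB h)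
  obtain ⟨D, hD⟩ := exists_comp_eq_of_factorsThrough hg hgC
  have hDC : D.flip.compl₁₂ f g = C ∘ₗ f :=
    LinearMap.ext₂ fun x y ↦ LinearMap.congr_fun₂ hD y (f x)
  exact ⟨D.flip, hDC, fun E hE ↦ (LinearMap.compl₁₂_inj hf hg).mp (hE.trans hDC.symm)⟩

end Descent

theorem apply_eq_apply_of_sharp_mem {R M : Type*} [CommSemiring R]
    [AddCommMonoid M] [Module R M] {Pi : Dual R M →ₗ[R] Dual R M →ₗ[R] R}
    {sharp : Dual R M →ₗ[R] M} (hsharp : ∀ ξ η, η (sharp ξ) = Pi ξ η) {W : Submodule R M}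
    {ξ η η' : Dual R M} (hξ : sharp ξ ∈ W) (hη : W.subtype.dualMap η = W.subtype.dualMap η') :
    Pi ξ η = Pi ξ η' :=
  calc Pi ξ η = η (sharp ξ) := (hsharp ξ η).symm
    _ = η' (sharp ξ) := LinearMap.congr_fun hη ⟨sharp ξ, hξ⟩
    _ = Pi ξ η' := hsharp ξ η'

section Field

variable {K V : Type*} [Field K] [AddCommGroup V] [Module K V]
  {Pi : Dual K V →ₗ[K] Dual K V →ₗ[K] K} {sharp : Dual K V →ₗ[K] V}

theorem comap_sharp_eq_dualAnnihilator_map_sharp (hPi : Pi.IsRefl)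
    (hsharp : ∀ ξ η, η (sharp ξ) = Pi ξ η) (W : Submodule K V) :
    W.comap sharp = (W.dualAnnihilator.map sharp).dualAnnihilator := by
  ext ξ
  calc sharp ξ ∈ W ↔ ∀ η ∈ W.dualAnnihilator, η (sharp ξ) = 0 :=
        (Subspace.forall_mem_dualAnnihilator_apply_eq_zero_iff W (sharp ξ)).symm
    _ ↔ ∀ η ∈ W.dualAnnihilator, ξ (sharp η) = 0 := by simp only [hsharp, hPi.eq_iff]
    _ ↔ ξ ∈ (W.dualAnnihilator.map sharp).dualAnnihilator := by
        simp only [Submodule.mem_dualAnnihilator, Submodule.mem_map, forall_exists_index, and_imp,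
          forall_apply_eq_imp_iff₂]

theorem surjective_domRestrict_comap_sharp_iff_inf_eq_bot (hPi : Pi.IsRefl)
    (hsharp : ∀ ξ η, η (sharp ξ) = Pi ξ η) (W : Submodule K V) :
    Function.Surjective (W.subtype.dualMap.domRestrict (W.comap sharp)) ↔
      W ⊓ W.dualAnnihilator.map sharp = ⊥ := by
  have hrange : W.subtype.dualMap.range = ⊤ :=
    LinearMap.range_eq_top.mpr Subspace.dualRestrict_surjective
  have hker : W.subtype.dualMap.ker = W.dualAnnihilator :=
    W.dualRestrict_ker_eq_dualAnnihilator
  rw [← LinearMap.range_eq_top, LinearMap.range_domRestrict, LinearMap.map_eq_top_iff hrange, hker,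
    comap_sharp_eq_dualAnnihilator_map_sharp hPi hsharp, sup_comm,
    ← Subspace.dualAnnihilator_inf_eq, Submodule.dualAnnihilator_eq_top_iff]

theorem poisson_dirac_subspace_has_unique_induced_bivector_general (hPi : Pi.IsAlt)
    (hsharp : ∀ ξ η, η (sharp ξ) = Pi ξ η) {W : Submodule K V}
    (hPD : W ⊓ W.dualAnnihilator.map sharp = ⊥) :
    ∃! PiW : Dual K W →ₗ[K] Dual K W →ₗ[K] K,
      PiW.IsAlt ∧ ∀ ξ ∈ W.comap sharp, ∀ η ∈ W.comap sharp,
        PiW (W.subtype.dualMap ξ) (W.subtype.dualMap η) = Pi ξ η := by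
  let A := W.comap sharp
  have hsurj : Function.Surjective (W.subtype.dualMap.domRestrict A) :=
    (surjective_domRestrict_comap_sharp_iff_inf_eq_bot hPi.isRefl hsharp W).mpr hPD
  have hright : Function.FactorsThrough (Pi.domRestrict₁₂ A A).flip
      (W.subtype.dualMap.domRestrict A) := fun η η' h ↦
    LinearMap.ext fun ξ ↦ apply_eq_apply_of_sharp_mem hsharp ξ.2 h
  have hleft : Function.FactorsThrough (Pi.domRestrict₁₂ A A)
      (W.subtype.dualMap.domRestrict A) := fun ξ ξ' h ↦ LinearMap.ext fun η ↦
    calc Pi ξ η = -Pi η ξ := (hPi.neg η ξ).symm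
      _ = -Pi η ξ' := congrArg Neg.neg (apply_eq_apply_of_sharp_mem hsharp η.2 h)
      _ = Pi ξ' η := hPi.neg η ξ'
  obtain ⟨PiW, hPiW, hunique⟩ :=
    existsUnique_compl₁₂_eq_of_factorsThrough hsurj hsurj hleft hright
  refine ⟨PiW, ⟨fun ζ ↦ ?_, fun ξ hξ η hη ↦ LinearMap.congr_fun₂ hPiW ⟨ξ, hξ⟩ ⟨η, hη⟩⟩,
    fun Q hQ ↦ hunique Q <| LinearMap.ext₂ fun ξ η ↦ hQ.2 ξ ξ.2 η η.2⟩
  obtain ⟨ξ, rfl⟩ := hsurj ζ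
  exact (LinearMap.congr_fun₂ hPiW ξ ξ).trans (hPi ξ)

end Field

/-- Let `V` be a finite-dimensional real vector space, `Π` a bivector on `V`
(with induced `♯ : V* → V`), and `W ⊆ V` a Poisson-Dirac subspace (`W ∩ ♯(W⁰) = {0}`).
Then there is a unique alternating bilinear form `Π_W` on `W*` such that
`Π_W (ξ|_W) (η|_W) = Π ξ η` for all `ξ, η ∈ A_W = {ξ : ♯ξ ∈ W}`.  (In particular, for
`ξ, η ∈ A_W` the value `Π ξ η` depends only on the restrictions `ξ|_W` and `η|_W`.) -/
theorem poisson_dirac_subspace_has_unique_induced_bivector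
    {V : Type*} [AddCommGroup V] [Module ℝ V] [FiniteDimensional ℝ V]
    (Pi : Dual ℝ V →ₗ[ℝ] Dual ℝ V →ₗ[ℝ] ℝ) (hPi : ∀ ξ, Pi ξ ξ = 0)
    (sharp : Dual ℝ V →ₗ[ℝ] V) (hsharp : ∀ ξ η, η (sharp ξ) = Pi ξ η)
    (W : Submodule ℝ V)
    (hPD : W ⊓ Submodule.map sharp W.dualAnnihilator = ⊥) :
    ∃! PiW : Dual ℝ W →ₗ[ℝ] Dual ℝ W →ₗ[ℝ] ℝ,
      (∀ ζ, PiW ζ ζ = 0) ∧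
      ∀ ξ ∈ Submodule.comap sharp W, ∀ η ∈ Submodule.comap sharp W,
        PiW (W.subtype.dualMap ξ) (W.subtype.dualMap η) = Pi ξ η := by
  exact poisson_dirac_subspace_has_unique_induced_bivector_general hPi hsharp hPD
end

section
/- Let V be a finite-dimensional real vector space, Π a bivector on V, W ⊆ V a subspace, and p : V → V a linear projection with range W (p∘p = p, p(V) = W), with kernel E = ker p. Then the following are equivalent: (i) p vanishes on ♯(W⁰), i.e. p(♯ξ) = 0 for all ξ ∈ W⁰ (p is a Dirac projection); (ii) ♯(ξ ∘ p) ∈ W for every ξ ∈ V* (i.e. the image of the transpose p* : V* → V* lies in A_W, so p* gives a splitting of the restriction map A_W → W*); (iii) Π(ξ, η) = 0 for all ξ ∈ W⁰ and all η ∈ E⁰ (W⁰ and E⁰ are Π-orthogonal). -/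
/-!
A vector lies in a subspace iff the annihilator of that subspace kills it, so `♯ξ ∈ E` means that
`ξ` is `Π`-orthogonal to `E⁰`. Hence condition (i), which says `♯(W⁰) ⊆ E`, is the orthogonality
(iii) of `W⁰` and `E⁰`. As `E⁰` is the range of the transpose of `p`, condition (ii) says
`♯(E⁰) ⊆ W`, which is the same orthogonality with the two sides exchanged.
-/

open Module

section Sharp

variable {K V V' : Type*} [Field K] [AddCommGroup V] [Module K V] [AddCommGroup V'] [Module K V']
  {B : Dual K V →ₗ[K] Dual K V →ₗ[K] K} {sharp : Dual K V →ₗ[K] V}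

theorem sharp_mem_iff (hsharp : ∀ ξ η, η (sharp ξ) = B ξ η) (W : Submodule K V) (ξ : Dual K V) :
    sharp ξ ∈ W ↔ ∀ η ∈ W.dualAnnihilator, B ξ η = 0 := by
  simp only [← Subspace.forall_mem_dualAnnihilator_apply_eq_zero_iff W, hsharp]

theorem forall_sharp_mem_comm (hB : B.IsRefl) (hsharp : ∀ ξ η, η (sharp ξ) = B ξ η)
    (W E : Submodule K V) :
    (∀ ξ ∈ W.dualAnnihilator, sharp ξ ∈ E) ↔ ∀ η ∈ E.dualAnnihilator, sharp η ∈ W := by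
  simp only [sharp_mem_iff hsharp]
  exact ⟨fun h η hη ξ hξ => hB ξ η (h ξ hξ η hη), fun h ξ hξ η hη => hB η ξ (h η hη ξ hξ)⟩

theorem forall_dualMap_iff (p : V →ₗ[K] V') {P : Dual K V → Prop} :
    (∀ ζ : Dual K V', P (p.dualMap ζ)) ↔ ∀ η ∈ (LinearMap.ker p).dualAnnihilator, P η := by
  simp only [← LinearMap.range_dualMap_eq_dualAnnihilator_ker, LinearMap.mem_range,
    forall_exists_index, forall_apply_eq_imp_iff]

theorem dirac_projection_tfae_general (hB : B.IsRefl) (hsharp : ∀ ξ η, η (sharp ξ) = B ξ η)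
    (W : Submodule K V) (p : V →ₗ[K] V') :
    List.TFAE [
      ∀ ξ ∈ W.dualAnnihilator, p (sharp ξ) = 0,
      ∀ ζ : Dual K V', sharp (p.dualMap ζ) ∈ W,
      ∀ ξ ∈ W.dualAnnihilator, ∀ η ∈ (LinearMap.ker p).dualAnnihilator, B ξ η = 0] := by
  tfae_have 1 ↔ 2 :=
    (forall_sharp_mem_comm hB hsharp W (LinearMap.ker p)).trans
      (forall_dualMap_iff p (P := fun η => sharp η ∈ W)).symm
  tfae_have 1 ↔ 3 := forall₂_congr fun ξ _ => sharp_mem_iff hsharp (LinearMap.ker p) ξ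
  tfae_finish

end Sharp

/-- Let `V` be a finite-dimensional real vector space, `Π` a bivector
(with induced `♯ : V* → V`), `W ⊆ V` a subspace, and `p : V → V` a linear projection with
range `W` (`p ∘ p = p`, `p(V) = W`), with kernel `E = ker p`.  Then the following are
equivalent:
(i) `p` vanishes on `♯(W⁰)` (`p` is a Dirac projection);
(ii) `♯(ξ ∘ p) ∈ W` for every `ξ ∈ V*`, i.e. the image of the transpose `p* : V* → V*`
lies in `A_W` (so `p*` gives a splitting of the restriction map `A_W → W*`);
(iii) `Π ξ η = 0` for all `ξ ∈ W⁰` and all `η ∈ E⁰` (`W⁰` and `E⁰` are `Π`-orthogonal). -/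
theorem dirac_projection_tfae
    {V : Type*} [AddCommGroup V] [Module ℝ V] [FiniteDimensional ℝ V]
    (Pi : Dual ℝ V →ₗ[ℝ] Dual ℝ V →ₗ[ℝ] ℝ) (hPi : ∀ ξ, Pi ξ ξ = 0)
    (sharp : Dual ℝ V →ₗ[ℝ] V) (hsharp : ∀ ξ η, η (sharp ξ) = Pi ξ η)
    (W : Submodule ℝ V) (p : V →ₗ[ℝ] V)
    (hproj : p ∘ₗ p = p) (hrange : LinearMap.range p = W) :
    ((∀ ξ ∈ W.dualAnnihilator, p (sharp ξ) = 0) ↔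
      (∀ ξ : Dual ℝ V, sharp (p.dualMap ξ) ∈ W)) ∧
    ((∀ ξ ∈ W.dualAnnihilator, p (sharp ξ) = 0) ↔
      (∀ ξ ∈ W.dualAnnihilator, ∀ η ∈ (LinearMap.ker p).dualAnnihilator, Pi ξ η = 0)) :=
  have h := dirac_projection_tfae_general (LinearMap.IsAlt.isRefl hPi) hsharp W p
  ⟨h.out 0 1, h.out 0 2⟩
end

section
/- Let V be a finite-dimensional real vector space, Π a bivector on V, and W ⊆ V a Poisson-Dirac subspace. Set r = dim(W⁰ ∩ ker ♯) (the rank of W), rank Π = dim(Im ♯), and rank Π_W = dim(Im ♯_W), where Π_W is the induced bivector on W. Then: dim A_W = dim W + r; dim V = dim(W + ♯(W⁰)) + r; (dim V − dim W) − r = rank Π − rank Π_W; and consequently 0 ≤ r ≤ dim V − dim W. -/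
/-!
Since orthogonality for `Π` is symmetric, `A_W` is the annihilator of `♯(W⁰)`. Rank-nullity for
`♯` on `W⁰` gives `dim ♯(W⁰) + r = dim V - dim W`, hence `dim A_W = dim W + r`, and also the
formula for `dim V` because `W` and `♯(W⁰)` are independent.

The Poisson-Dirac condition dualizes to `A_W + W⁰ = (♯(W⁰) ∩ W)⁰ = V*`: every covector on `W`
extends to an element of `A_W`. As `♯_W (ξ|_W) = ♯ξ` for `ξ ∈ A_W`, this yields
`Im ♯_W = Im ♯ ∩ W = ♯(A_W)`, and rank-nullity for `♯` on `A_W ⊇ ker ♯` gives `rank Π_W`.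
-/

open Module

theorem finrank_map_add_finrank_inf_ker {K E F : Type*} [DivisionRing K]
    [AddCommGroup E] [Module K E] [AddCommGroup F] [Module K F]
    (f : E →ₗ[K] F) (S : Submodule K E) [FiniteDimensional K S] :
    finrank K (S.map f) + finrank K (S ⊓ LinearMap.ker f : Submodule K E) = finrank K S := by
  have h := (f.domRestrict S).finrank_range_add_finrank_ker
  rwa [LinearMap.range_domRestrict, LinearMap.ker_domRestrict, ← Submodule.finrank_map_subtype_eq,
    Submodule.map_comap_subtype] at h

section

variable {K V : Type*} [Field K] [AddCommGroup V] [Module K V]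

/-- `sharp` is the map `♯ : V* → V` induced by the bilinear form `Pi` on `V*`. It is a predicate
because in infinite dimension a form need not induce a map into `V`. -/
def IsSharp (Pi : Dual K V →ₗ[K] Dual K V →ₗ[K] K) (sharp : Dual K V →ₗ[K] V) : Prop :=
  ∀ ξ η, η (sharp ξ) = Pi ξ η

/-- The Poisson-Dirac condition `W ∩ ♯(W⁰) = {0}` on the subspace `W`. -/
def IsPoissonDirac (sharp : Dual K V →ₗ[K] V) (W : Submodule K V) : Prop :=
  Disjoint W (W.dualAnnihilator.map sharp)

/-- `PiW` is a form on `W*` induced by `Pi`: it is computed by extending covectors on `W` to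
elements of `A_W`, which is encoded as `W.comap sharp`. -/
def IsInducedForm (Pi : Dual K V →ₗ[K] Dual K V →ₗ[K] K) (sharp : Dual K V →ₗ[K] V)
    (W : Submodule K V) (PiW : Dual K W →ₗ[K] Dual K W →ₗ[K] K) : Prop :=
  ∀ ξ ∈ W.comap sharp, ∀ η ∈ W.comap sharp,
    PiW (W.subtype.dualMap ξ) (W.subtype.dualMap η) = Pi ξ η

/-- The rank `r = dim (W⁰ ∩ ker ♯)` of the subspace `W`. -/
noncomputable def poissonDiracRank (sharp : Dual K V →ₗ[K] V) (W : Submodule K V) : ℕ :=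
  finrank K (W.dualAnnihilator ⊓ LinearMap.ker sharp : Submodule K (Dual K V))

variable {Pi : Dual K V →ₗ[K] Dual K V →ₗ[K] K} {sharp : Dual K V →ₗ[K] V} {W : Submodule K V}
  {PiW : Dual K W →ₗ[K] Dual K W →ₗ[K] K} {sharpW : Dual K W →ₗ[K] W}

theorem IsSharp.comap_eq_dualAnnihilator_map (hsharp : IsSharp Pi sharp) (hPi : Pi.IsRefl)
    (W : Submodule K V) :
    W.comap sharp = (W.dualAnnihilator.map sharp).dualAnnihilator := by
  ext ξ
  calc ξ ∈ W.comap sharp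
      ↔ ∀ η ∈ W.dualAnnihilator, η (sharp ξ) = 0 :=
        (Subspace.forall_mem_dualAnnihilator_apply_eq_zero_iff W (sharp ξ)).symm
    _ ↔ ∀ η ∈ W.dualAnnihilator, ξ (sharp η) = 0 := by
        simp only [hsharp ξ, hsharp _ ξ, hPi.eq_iff]
    _ ↔ ξ ∈ (W.dualAnnihilator.map sharp).dualAnnihilator := by
        simp only [Submodule.mem_dualAnnihilator, Submodule.mem_map, forall_exists_index, and_imp,
          forall_apply_eq_imp_iff₂]

theorem IsPoissonDirac.comap_sup_dualAnnihilator (hW : IsPoissonDirac sharp W)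
    (hsharp : IsSharp Pi sharp) (hPi : Pi.IsRefl) :
    W.comap sharp ⊔ W.dualAnnihilator = ⊤ := by
  rw [hsharp.comap_eq_dualAnnihilator_map hPi, ← Subspace.dualAnnihilator_inf_eq,
    hW.symm.eq_bot, Submodule.dualAnnihilator_bot]

theorem IsPoissonDirac.exists_mem_comap_dualMap_eq (hW : IsPoissonDirac sharp W)
    (hsharp : IsSharp Pi sharp) (hPi : Pi.IsRefl) (ζ : Dual K W) :
    ∃ ξ ∈ W.comap sharp, W.subtype.dualMap ξ = ζ := by
  have restrict_surjective : LinearMap.range W.subtype.dualMap = ⊤ :=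
    LinearMap.range_eq_top.mpr (LinearMap.dualMap_surjective_of_injective W.injective_subtype)
  have map_eq_top : (W.comap sharp).map W.subtype.dualMap = ⊤ := by
    rw [LinearMap.map_eq_top_iff restrict_surjective,
      LinearMap.ker_dualMap_eq_dualAnnihilator_range, Submodule.range_subtype,
      hW.comap_sup_dualAnnihilator hsharp hPi]
  exact Submodule.mem_map.mp (map_eq_top ▸ Submodule.mem_top)

theorem IsInducedForm.coe_sharp_dualMap (hPiW : IsInducedForm Pi sharp W PiW)
    (hsharpW : IsSharp PiW sharpW) (hW : IsPoissonDirac sharp W) (hsharp : IsSharp Pi sharp)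
    (hPi : Pi.IsRefl) {ξ : Dual K V} (hξ : ξ ∈ W.comap sharp) :
    (sharpW (W.subtype.dualMap ξ) : V) = sharp ξ := by
  suffices sharpW (W.subtype.dualMap ξ) = ⟨sharp ξ, hξ⟩ from congrArg Subtype.val this
  refine Module.eval_apply_injective K (LinearMap.ext fun ζ ↦ ?_)
  obtain ⟨η, hη, rfl⟩ := hW.exists_mem_comap_dualMap_eq hsharp hPi ζ
  calc W.subtype.dualMap η (sharpW (W.subtype.dualMap ξ))
      = PiW (W.subtype.dualMap ξ) (W.subtype.dualMap η) := hsharpW _ _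
    _ = Pi ξ η := hPiW ξ hξ η hη
    _ = η (sharp ξ) := (hsharp ξ η).symm

theorem IsInducedForm.map_subtype_range_sharp (hPiW : IsInducedForm Pi sharp W PiW)
    (hsharpW : IsSharp PiW sharpW) (hW : IsPoissonDirac sharp W) (hsharp : IsSharp Pi sharp)
    (hPi : Pi.IsRefl) :
    (LinearMap.range sharpW).map W.subtype = LinearMap.range sharp ⊓ W := by
  rw [← Submodule.map_comap_eq]
  ext v
  constructor
  · rintro ⟨_, ⟨ζ, rfl⟩, rfl⟩
    obtain ⟨ξ, hξ, rfl⟩ := hW.exists_mem_comap_dualMap_eq hsharp hPi ζ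
    exact ⟨ξ, hξ, (hPiW.coe_sharp_dualMap hsharpW hW hsharp hPi hξ).symm⟩
  · rintro ⟨ξ, hξ, rfl⟩
    exact ⟨_, ⟨_, rfl⟩, hPiW.coe_sharp_dualMap hsharpW hW hsharp hPi hξ⟩

variable [FiniteDimensional K V]

theorem finrank_add_finrank_map_dualAnnihilator_add_rank (sharp : Dual K V →ₗ[K] V)
    (W : Submodule K V) :
    finrank K W + finrank K (W.dualAnnihilator.map sharp) + poissonDiracRank sharp W
      = finrank K V := by
  rw [poissonDiracRank, add_assoc, finrank_map_add_finrank_inf_ker,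
    Subspace.finrank_add_finrank_dualAnnihilator_eq]

theorem IsSharp.finrank_comap (hsharp : IsSharp Pi sharp) (hPi : Pi.IsRefl) (W : Submodule K V) :
    finrank K (W.comap sharp) = finrank K W + poissonDiracRank sharp W := by
  have rank_nullity := finrank_add_finrank_map_dualAnnihilator_add_rank sharp W
  have annihilator := Subspace.finrank_add_finrank_dualAnnihilator_eq (W.dualAnnihilator.map sharp)
  rw [← hsharp.comap_eq_dualAnnihilator_map hPi] at annihilator
  lia

theorem IsPoissonDirac.finrank_sup_map_dualAnnihilator_add_rank (hW : IsPoissonDirac sharp W) :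
    finrank K (W ⊔ W.dualAnnihilator.map sharp : Submodule K V) + poissonDiracRank sharp W
      = finrank K V := by
  have direct_sum := Submodule.finrank_sup_add_finrank_inf_eq W (W.dualAnnihilator.map sharp)
  rw [hW.eq_bot, finrank_bot, add_zero] at direct_sum
  rw [direct_sum, finrank_add_finrank_map_dualAnnihilator_add_rank]

theorem IsInducedForm.finrank_range_sharp_add_finrank_ker (hPiW : IsInducedForm Pi sharp W PiW)
    (hsharpW : IsSharp PiW sharpW) (hW : IsPoissonDirac sharp W) (hsharp : IsSharp Pi sharp)
    (hPi : Pi.IsRefl) :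
    finrank K (LinearMap.range sharpW) + finrank K (LinearMap.ker sharp)
      = finrank K (W.comap sharp) := by
  have rank_nullity := finrank_map_add_finrank_inf_ker sharp (W.comap sharp)
  rwa [Submodule.map_comap_eq, ← hPiW.map_subtype_range_sharp hsharpW hW hsharp hPi,
    Submodule.finrank_map_subtype_eq, inf_eq_right.mpr (LinearMap.ker_le_comap sharp)]
    at rank_nullity

theorem poisson_dirac_rank_identities_general (hPi : Pi.IsRefl) (hsharp : IsSharp Pi sharp)
    (hW : IsPoissonDirac sharp W) (hPiW : IsInducedForm Pi sharp W PiW)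
    (hsharpW : IsSharp PiW sharpW) :
    finrank K (W.comap sharp) = finrank K W + poissonDiracRank sharp W ∧
    finrank K V
      = finrank K (W ⊔ W.dualAnnihilator.map sharp : Submodule K V) + poissonDiracRank sharp W ∧
    finrank K V + finrank K (LinearMap.range sharpW)
      = finrank K W + poissonDiracRank sharp W + finrank K (LinearMap.range sharp) ∧
    poissonDiracRank sharp W + finrank K W ≤ finrank K V := by
  have comap_dim := hsharp.finrank_comap hPi W
  have sup_dim := hW.finrank_sup_map_dualAnnihilator_add_rank
  have induced_rank := hPiW.finrank_range_sharp_add_finrank_ker hsharpW hW hsharp hPi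
  have rank_nullity := sharp.finrank_range_add_finrank_ker
  rw [Subspace.dual_finrank_eq] at rank_nullity
  have rank_bound := finrank_add_finrank_map_dualAnnihilator_add_rank sharp W
  exact ⟨comap_dim, sup_dim.symm, by lia, by lia⟩

end

/-- Let `V` be a finite-dimensional real vector space, `Π` a bivector on
`V` (with induced `♯ : V* → V`), and `W ⊆ V` a Poisson-Dirac subspace, with induced
bivector `Π_W` on `W` and induced map `♯_W : W* → W`.  Set `r = dim (W⁰ ∩ ker ♯)` (the
rank of `W`), `rank Π = dim (Im ♯)` and `rank Π_W = dim (Im ♯_W)`.  Then: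
`dim A_W = dim W + r`; `dim V = dim (W + ♯(W⁰)) + r`;
`codim W − r = rank Π − rank Π_W` (stated additively as
`dim V + rank Π_W = dim W + r + rank Π`); and consequently `0 ≤ r ≤ codim W`
(stated as `r + dim W ≤ dim V`). -/
theorem poisson_dirac_rank_identities
    {V : Type*} [AddCommGroup V] [Module ℝ V] [FiniteDimensional ℝ V]
    (Pi : Dual ℝ V →ₗ[ℝ] Dual ℝ V →ₗ[ℝ] ℝ) (hPi : ∀ ξ, Pi ξ ξ = 0)
    (sharp : Dual ℝ V →ₗ[ℝ] V) (hsharp : ∀ ξ η, η (sharp ξ) = Pi ξ η)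
    (W : Submodule ℝ V)
    (hPD : W ⊓ Submodule.map sharp W.dualAnnihilator = ⊥)
    (PiW : Dual ℝ W →ₗ[ℝ] Dual ℝ W →ₗ[ℝ] ℝ)
    (hPiW : ∀ ξ ∈ Submodule.comap sharp W, ∀ η ∈ Submodule.comap sharp W,
      PiW (W.subtype.dualMap ξ) (W.subtype.dualMap η) = Pi ξ η)
    (sharpW : Dual ℝ W →ₗ[ℝ] W) (hsharpW : ∀ ζ ζ', ζ' (sharpW ζ) = PiW ζ ζ')
    (r : ℕ)
    (hr : r = finrank ℝ (W.dualAnnihilator ⊓ LinearMap.ker sharp : Submodule ℝ (Dual ℝ V))) :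
    finrank ℝ (Submodule.comap sharp W : Submodule ℝ (Dual ℝ V)) = finrank ℝ W + r ∧
    finrank ℝ V
      = finrank ℝ (W ⊔ Submodule.map sharp W.dualAnnihilator : Submodule ℝ V) + r ∧
    finrank ℝ V + finrank ℝ (LinearMap.range sharpW)
      = finrank ℝ W + r + finrank ℝ (LinearMap.range sharp) ∧
    r + finrank ℝ W ≤ finrank ℝ V := by
  subst hr
  exact poisson_dirac_rank_identities_general (LinearMap.IsAlt.isRefl hPi) hsharp
    (disjoint_iff.mpr hPD) hPiW hsharpW
end

section
/- Let V be a finite-dimensional real vector space, Π a bivector on V, and W ⊆ V a subspace. Then the following are equivalent: (i) V = W + ♯(W⁰) (W is cosymplectic); (ii) V = W ⊕ ♯(W⁰); (iii) W ∩ ♯(W⁰) = {0} and W⁰ ∩ ker ♯ = {0} (W is a Poisson-Dirac subspace of rank zero); (iv) W ∩ ♯(W⁰) = {0} and W + Im ♯ = V. -/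
open Module

/-!
Since `Π(ξ, η) = 0` and `Π(η, ξ) = 0` are equivalent, `η` annihilates `♯(Φ)` exactly when `Φ`
annihilates `♯η`. Taking annihilators therefore turns `W + ♯(W⁰) = V` into `W⁰ ∩ ♯⁻¹(W) = 0` and
`W + Im ♯ = V` into `W⁰ ∩ ker ♯ = 0`. The rest is a fact about any linear map `f`: the preimage
`f⁻¹(W)` meets a submodule `Φ` trivially exactly when `W ∩ f(Φ)` and `Φ ∩ ker f` are both trivial.
-/

theorem inf_comap_eq_bot_iff {R M N : Type*} [Semiring R] [AddCommMonoid M] [AddCommMonoid N]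
    [Module R M] [Module R N] (f : M →ₗ[R] N) (Φ : Submodule R M) (W : Submodule R N) :
    Φ ⊓ W.comap f = ⊥ ↔ W ⊓ Φ.map f = ⊥ ∧ Φ ⊓ LinearMap.ker f = ⊥ := by
  constructor
  · intro h
    constructor
    · rw [inf_comm, Submodule.map_inf_eq_map_inf_comap, h, Submodule.map_bot]
    · exact eq_bot_mono (inf_le_inf_left Φ (LinearMap.ker_le_comap f)) h
  · rintro ⟨hW, hker⟩
    have hle : Φ ⊓ W.comap f ≤ LinearMap.ker f := by
      rw [LinearMap.le_ker_iff_map, ← Submodule.map_inf_eq_map_inf_comap, inf_comm, hW]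
    exact eq_bot_mono (le_inf inf_le_left hle) hker

theorem dualAnnihilator_map_sharp {R M : Type*} [CommSemiring R] [AddCommMonoid M] [Module R M]
    {Pi : Dual R M →ₗ[R] Dual R M →ₗ[R] R} (hPi : Pi.IsRefl)
    {sharp : Dual R M →ₗ[R] M} (hsharp : ∀ ξ η, η (sharp ξ) = Pi ξ η)
    (Φ : Submodule R (Dual R M)) :
    (Φ.map sharp).dualAnnihilator = Φ.dualCoannihilator.comap sharp := by
  ext η
  simp only [Submodule.mem_dualAnnihilator, Submodule.mem_map, forall_exists_index, and_imp,
    forall_apply_eq_imp_iff₂, Submodule.mem_comap, Submodule.mem_dualCoannihilator, hsharp]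
  exact forall₂_congr fun _ _ => hPi.eq_iff

section Field

variable {K V : Type*} [Field K] [AddCommGroup V] [Module K V]
  {Pi : Dual K V →ₗ[K] Dual K V →ₗ[K] K} {sharp : Dual K V →ₗ[K] V}

theorem sup_map_sharp_eq_top_iff (hPi : Pi.IsRefl)
    (hsharp : ∀ ξ η, η (sharp ξ) = Pi ξ η) (W : Submodule K V)
    (Φ : Submodule K (Dual K V)) :
    W ⊔ Φ.map sharp = ⊤ ↔ W.dualAnnihilator ⊓ Φ.dualCoannihilator.comap sharp = ⊥ := by
  rw [← Submodule.dualAnnihilator_eq_bot_iff, Submodule.dualAnnihilator_sup_eq,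
    dualAnnihilator_map_sharp hPi hsharp]

theorem sup_map_sharp_dualAnnihilator_eq_top_iff (hPi : Pi.IsRefl)
    (hsharp : ∀ ξ η, η (sharp ξ) = Pi ξ η) (W : Submodule K V) :
    W ⊔ W.dualAnnihilator.map sharp = ⊤ ↔
      W ⊓ W.dualAnnihilator.map sharp = ⊥ ∧ W.dualAnnihilator ⊓ LinearMap.ker sharp = ⊥ := by
  rw [sup_map_sharp_eq_top_iff hPi hsharp, Subspace.dualAnnihilator_dualCoannihilator_eq,
    inf_comap_eq_bot_iff]

theorem sup_range_sharp_eq_top_iff (hPi : Pi.IsRefl)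
    (hsharp : ∀ ξ η, η (sharp ξ) = Pi ξ η) (W : Submodule K V) :
    W ⊔ LinearMap.range sharp = ⊤ ↔ W.dualAnnihilator ⊓ LinearMap.ker sharp = ⊥ := by
  rw [LinearMap.range_eq_map, sup_map_sharp_eq_top_iff hPi hsharp,
    Submodule.dualCoannihilator_top, Submodule.comap_bot]

theorem cosymplectic_subspace_tfae_general (hPi : Pi.IsRefl)
    (hsharp : ∀ ξ η, η (sharp ξ) = Pi ξ η) (W : Submodule K V) :
    List.TFAE [
      W ⊔ W.dualAnnihilator.map sharp = ⊤,
      W ⊔ W.dualAnnihilator.map sharp = ⊤ ∧ W ⊓ W.dualAnnihilator.map sharp = ⊥,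
      W ⊓ W.dualAnnihilator.map sharp = ⊥ ∧ W.dualAnnihilator ⊓ LinearMap.ker sharp = ⊥,
      W ⊓ W.dualAnnihilator.map sharp = ⊥ ∧ W ⊔ LinearMap.range sharp = ⊤] := by
  have cosymplectic_iff := sup_map_sharp_dualAnnihilator_eq_top_iff hPi hsharp W
  tfae_have 1 ↔ 3 := cosymplectic_iff
  tfae_have 1 → 2 := fun h => ⟨h, (cosymplectic_iff.1 h).1⟩
  tfae_have 2 → 1 := And.left
  tfae_have 3 ↔ 4 := by rw [sup_range_sharp_eq_top_iff hPi hsharp]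
  tfae_finish

end Field

/-- Let `V` be a finite-dimensional real vector space, `Π` a bivector on `V`
(with induced `♯ : V* → V`), and `W ⊆ V` a subspace.  The following are equivalent:
(i) `V = W + ♯(W⁰)` (`W` is cosymplectic);
(ii) `V = W ⊕ ♯(W⁰)`;
(iii) `W ∩ ♯(W⁰) = {0}` and `W⁰ ∩ ker ♯ = {0}` (`W` is Poisson-Dirac of rank zero);
(iv) `W ∩ ♯(W⁰) = {0}` and `W + Im ♯ = V`. -/
theorem cosymplectic_subspace_tfae
    {V : Type*} [AddCommGroup V] [Module ℝ V] [FiniteDimensional ℝ V]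
    (Pi : Dual ℝ V →ₗ[ℝ] Dual ℝ V →ₗ[ℝ] ℝ) (hPi : ∀ ξ, Pi ξ ξ = 0)
    (sharp : Dual ℝ V →ₗ[ℝ] V) (hsharp : ∀ ξ η, η (sharp ξ) = Pi ξ η)
    (W : Submodule ℝ V) :
    ((W ⊔ Submodule.map sharp W.dualAnnihilator = ⊤) ↔
      (W ⊔ Submodule.map sharp W.dualAnnihilator = ⊤ ∧
       W ⊓ Submodule.map sharp W.dualAnnihilator = ⊥)) ∧
    ((W ⊔ Submodule.map sharp W.dualAnnihilator = ⊤) ↔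
      (W ⊓ Submodule.map sharp W.dualAnnihilator = ⊥ ∧
       W.dualAnnihilator ⊓ LinearMap.ker sharp = ⊥)) ∧
    ((W ⊔ Submodule.map sharp W.dualAnnihilator = ⊤) ↔
      (W ⊓ Submodule.map sharp W.dualAnnihilator = ⊥ ∧
       W ⊔ LinearMap.range sharp = ⊤)) := by
  have h := cosymplectic_subspace_tfae_general (LinearMap.IsAlt.isRefl hPi) hsharp W
  exact ⟨h.out 0 1, h.out 0 2, h.out 0 3⟩
end

section
/- Let V be a finite-dimensional real vector space, Π a bivector on V, and W ⊆ V a subspace. Then W⁰ ⊆ ker ♯ if and only if Im ♯ ⊆ W. Either condition implies that W is a Poisson-Dirac subspace whose rank equals the codimension of W, i.e. dim(W⁰ ∩ ker ♯) = dim V − dim W; conversely, a Poisson-Dirac subspace whose rank equals its codimension satisfies W⁰ ⊆ ker ♯ (so W is a Poisson subspace). -/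
/-!
A covector `η` kills `Im ♯` iff `Π(ξ, η) = η (♯ξ)` vanishes for all `ξ`; as `Π` is reflexive, this
says that every covector kills `♯η`, that is, `♯η = 0`. So `(Im ♯)⁰ = ker ♯`, and since annihilation
reverses inclusions, `W⁰ ≤ ker ♯ = (Im ♯)⁰` iff `Im ♯ ≤ W`. As `W⁰` is the dual of `V ⧸ W`, its
subspace `W⁰ ∩ ker ♯` has dimension `codim W` iff it is all of `W⁰`.
-/

open Module

theorem dualAnnihilator_range_sharp_eq_ker {R M : Type*} [CommSemiring R] [AddCommMonoid M]
    [Module R M] [Projective R M] {Pi : Dual R M →ₗ[R] Dual R M →ₗ[R] R} (hPi : Pi.IsRefl)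
    {sharp : Dual R M →ₗ[R] M} (hsharp : ∀ ξ η, η (sharp ξ) = Pi ξ η) :
    (LinearMap.range sharp).dualAnnihilator = LinearMap.ker sharp := by
  ext η
  calc η ∈ (LinearMap.range sharp).dualAnnihilator
    _ ↔ ∀ ξ, η (sharp ξ) = 0 := by simp [Submodule.mem_dualAnnihilator]
    _ ↔ ∀ ξ : Dual R M, ξ (sharp η) = 0 := by simp only [hsharp, hPi.eq_iff]
    _ ↔ η ∈ LinearMap.ker sharp := by rw [forall_dual_apply_eq_zero_iff, LinearMap.mem_ker]

theorem finrank_inf_eq_finrank_left_iff {K V : Type*} [DivisionRing K] [AddCommGroup V] [Module K V]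
    {S T : Submodule K V} [FiniteDimensional K S] :
    finrank K (S ⊓ T : Submodule K V) = finrank K S ↔ S ≤ T :=
  ⟨fun h => inf_eq_left.mp (Submodule.eq_of_le_of_finrank_eq inf_le_left h),
    fun h => by rw [inf_eq_left.mpr h]⟩

section Field

variable {K V : Type*} [Field K] [AddCommGroup V] [Module K V]

theorem dualAnnihilator_le_ker_sharp_iff {Pi : Dual K V →ₗ[K] Dual K V →ₗ[K] K} (hPi : Pi.IsRefl)
    {sharp : Dual K V →ₗ[K] V} (hsharp : ∀ ξ η, η (sharp ξ) = Pi ξ η) {W : Submodule K V} :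
    W.dualAnnihilator ≤ LinearMap.ker sharp ↔ LinearMap.range sharp ≤ W := by
  rw [← dualAnnihilator_range_sharp_eq_ker hPi hsharp,
    Subspace.dualAnnihilator_le_dualAnnihilator_iff]

theorem finrank_dualAnnihilator_eq_finrank_quotient (W : Submodule K V) :
    finrank K W.dualAnnihilator = finrank K (V ⧸ W) :=
  W.dualQuotEquivDualAnnihilator.finrank_eq.symm.trans Subspace.dual_finrank_eq

theorem finrank_dualAnnihilator_inf_eq_finrank_quotient_iff {W : Submodule K V}
    [FiniteDimensional K (V ⧸ W)] {S : Submodule K (Dual K V)} :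
    finrank K (W.dualAnnihilator ⊓ S : Submodule K (Dual K V)) = finrank K (V ⧸ W) ↔
      W.dualAnnihilator ≤ S := by
  have : FiniteDimensional K W.dualAnnihilator :=
    Submodule.finite_dualAnnihilator_iff.mpr inferInstance
  rw [← finrank_dualAnnihilator_eq_finrank_quotient, finrank_inf_eq_finrank_left_iff]

theorem poisson_subspace_iff_maximal_rank_general
    (Pi : Dual K V →ₗ[K] Dual K V →ₗ[K] K) (hPi : Pi.IsRefl)
    (sharp : Dual K V →ₗ[K] V) (hsharp : ∀ ξ η, η (sharp ξ) = Pi ξ η)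
    (W : Submodule K V) [FiniteDimensional K (V ⧸ W)] :
    (W.dualAnnihilator ≤ LinearMap.ker sharp ↔ LinearMap.range sharp ≤ W) ∧
    (LinearMap.range sharp ≤ W →
      (W ⊓ Submodule.map sharp W.dualAnnihilator = ⊥ ∧
       finrank K (W.dualAnnihilator ⊓ LinearMap.ker sharp : Submodule K (Dual K V))
         = finrank K (V ⧸ W))) ∧
    (finrank K (W.dualAnnihilator ⊓ LinearMap.ker sharp : Submodule K (Dual K V))
        = finrank K (V ⧸ W) →
      W.dualAnnihilator ≤ LinearMap.ker sharp) := by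
  have ker_iff_range := dualAnnihilator_le_ker_sharp_iff hPi hsharp (W := W)
  refine ⟨ker_iff_range, fun range_le => ?_,
    finrank_dualAnnihilator_inf_eq_finrank_quotient_iff.mp⟩
  have le_ker := ker_iff_range.mpr range_le
  refine ⟨?_, finrank_dualAnnihilator_inf_eq_finrank_quotient_iff.mpr le_ker⟩
  rw [LinearMap.le_ker_iff_map.mp le_ker, inf_bot_eq]

end Field

/-- Let `V` be a finite-dimensional real vector space, `Π` a bivector on
`V` (with induced `♯ : V* → V`), and `W ⊆ V` a subspace.  Then `W⁰ ⊆ ker ♯` iff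
`Im ♯ ⊆ W` (`W` is a Poisson subspace).  Either condition implies that `W` is a
Poisson-Dirac subspace whose rank equals the codimension of `W`, i.e.
`dim (W⁰ ∩ ker ♯) = dim V − dim W`; conversely, a Poisson-Dirac subspace whose rank equals
its codimension satisfies `W⁰ ⊆ ker ♯`. -/
theorem poisson_subspace_iff_maximal_rank
    {V : Type*} [AddCommGroup V] [Module ℝ V] [FiniteDimensional ℝ V]
    (Pi : Dual ℝ V →ₗ[ℝ] Dual ℝ V →ₗ[ℝ] ℝ) (hPi : ∀ ξ, Pi ξ ξ = 0)
    (sharp : Dual ℝ V →ₗ[ℝ] V) (hsharp : ∀ ξ η, η (sharp ξ) = Pi ξ η)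
    (W : Submodule ℝ V) :
    (W.dualAnnihilator ≤ LinearMap.ker sharp ↔ LinearMap.range sharp ≤ W) ∧
    (LinearMap.range sharp ≤ W →
      (W ⊓ Submodule.map sharp W.dualAnnihilator = ⊥ ∧
       finrank ℝ (W.dualAnnihilator ⊓ LinearMap.ker sharp : Submodule ℝ (Dual ℝ V))
         = finrank ℝ V - finrank ℝ W)) ∧
    ((W ⊓ Submodule.map sharp W.dualAnnihilator = ⊥ ∧
      finrank ℝ (W.dualAnnihilator ⊓ LinearMap.ker sharp : Submodule ℝ (Dual ℝ V))
        = finrank ℝ V - finrank ℝ W) →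
      W.dualAnnihilator ≤ LinearMap.ker sharp) := by
  have h := poisson_subspace_iff_maximal_rank_general Pi (LinearMap.IsAlt.isRefl hPi) sharp hsharp W
  simpa only [← Submodule.finrank_quotient] using ⟨h.1, h.2.1, fun hW => h.2.2 hW.2⟩
end

section
/- Let a : ℝ³ → ℝ be a smooth function that is radially symmetric, i.e. a(x) = a(y) whenever ‖x‖ = ‖y‖. For smooth functions f, g : ℝ³ → ℝ define {f, g}(x) = a(x) · ⟨x, ∇f(x) × ∇g(x)⟩, where ∇ is the gradient, × the cross product and ⟨·,·⟩ the Euclidean inner product on ℝ³ (so {f, g}(x) = a(x) · det of the matrix with rows x, ∇f(x), ∇g(x)). Then {·,·} is a Poisson bracket on C^∞(ℝ³): it is ℝ-bilinear and antisymmetric, satisfies the Leibniz rule {fg, h} = f{g, h} + g{f, h}, and satisfies the Jacobi identity {f, {g, h}} + {g, {h, f}} + {h, {f, g}} = 0 for all smooth f, g, h. (This is the Poisson manifold M_a of the paper, the Kirillov-Poisson bracket of 𝔰𝔲(2)* rescaled by the radial function a.) -/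
/-!
The bracket has the form `{f, g} = dg (P df)` for the skew tensor field `P x α = a x • (x × α♯)`.
For any bracket of this form the second derivatives of `f`, `g`, `h` cancel from the cyclic sum
`{f, {g, h}} + {g, {h, f}} + {h, {f, g}}`, which leaves the cyclic sum of `dh (DP(P df) dg)`.

For the `P` at hand this remainder has two parts. The part containing `a²` is the Jacobi identity of
the cross product. The part containing `da` is `a • da (x × w)`, where
`w = ⟨x, ∇g × ∇h⟩ ∇f + ⟨x, ∇h × ∇f⟩ ∇g + ⟨x, ∇f × ∇g⟩ ∇h = det(∇f, ∇g, ∇h) x` is parallel to `x`.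
-/

open scoped RealInnerProductSpace

/-- The rescaled Kirillov–Poisson bracket on `ℝ³ ≃ 𝔰𝔲(2)*`:
`{f, g}(x) = a(x) · ⟨x, ∇f(x) × ∇g(x)⟩`, where `∇` is the gradient, `×` the cross
product and `⟨·,·⟩` the Euclidean inner product on `ℝ³`. -/
noncomputable def radialBracket (a : EuclideanSpace ℝ (Fin 3) → ℝ)
    (f g : EuclideanSpace ℝ (Fin 3) → ℝ) : EuclideanSpace ℝ (Fin 3) → ℝ :=
  fun x => a x *
    ⟪x, (WithLp.equiv 2 (Fin 3 → ℝ)).symm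
          (crossProduct
            (WithLp.equiv 2 (Fin 3 → ℝ) (gradient f x))
            (WithLp.equiv 2 (Fin 3 → ℝ) (gradient g x)))⟫

section BivectorBracket

variable {E F : Type*} [NormedAddCommGroup E] [NormedSpace ℝ E] [NormedAddCommGroup F]
  [NormedSpace ℝ F]

lemma fderiv_smul_clm_apply {a : E → ℝ} {x : E} (ha : DifferentiableAt ℝ a x) (L : E →L[ℝ] F)
    (u : E) : fderiv ℝ (fun y => a y • L y) x u = a x • L u + fderiv ℝ a x u • L x := by
  simp [fderiv_fun_smul ha L.differentiableAt]

/-- The bracket `{f, g} = dg (P df)` of a bivector field on `E`. The bivector at `x` is encoded by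
its contraction `P x`, which sends a covector to a vector; `x ↦ P x (df x)` is then the Hamiltonian
vector field of `f`. Skewness is not part of the data: it is the identity `β (P x α) = -α (P x β)`.
-/
noncomputable def bivectorBracket (P : E → StrongDual ℝ E →L[ℝ] E) (f g : E → ℝ) : E → ℝ :=
  fun x => fderiv ℝ g x (P x (fderiv ℝ f x))

variable {P : E → StrongDual ℝ E →L[ℝ] E} {f f' g g' h : E → ℝ} {x : E}

lemma bivectorBracket_smul_add_left (c : ℝ) (hf : DifferentiableAt ℝ f x)
    (hf' : DifferentiableAt ℝ f' x) :
    bivectorBracket P (c • f + f') g x =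
      c * bivectorBracket P f g x + bivectorBracket P f' g x := by
  simp [bivectorBracket, fderiv_add (hf.const_smul c) hf', fderiv_const_smul hf]

lemma bivectorBracket_smul_add_right (c : ℝ) (hg : DifferentiableAt ℝ g x)
    (hg' : DifferentiableAt ℝ g' x) :
    bivectorBracket P f (c • g + g') x =
      c * bivectorBracket P f g x + bivectorBracket P f g' x := by
  simp [bivectorBracket, fderiv_add (hg.const_smul c) hg', fderiv_const_smul hg]

lemma bivectorBracket_mul_left (hf : DifferentiableAt ℝ f x) (hg : DifferentiableAt ℝ g x) :
    bivectorBracket P (f * g) h x =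
      f x * bivectorBracket P g h x + g x * bivectorBracket P f h x := by
  simp [bivectorBracket, fderiv_mul hf hg]

lemma fderiv_bivectorBracket_apply (hP : DifferentiableAt ℝ P x)
    (hf : DifferentiableAt ℝ (fderiv ℝ f) x) (hg : DifferentiableAt ℝ (fderiv ℝ g) x) (u : E) :
    fderiv ℝ (bivectorBracket P f g) x u =
      fderiv ℝ (fderiv ℝ g) x u (P x (fderiv ℝ f x)) +
        fderiv ℝ g x (fderiv ℝ P x u (fderiv ℝ f x)) +
        fderiv ℝ g x (P x (fderiv ℝ (fderiv ℝ f) x u)) := by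
  unfold bivectorBracket
  rw [fderiv_clm_apply hg (hP.clm_apply hf), fderiv_clm_apply hP hf]
  simp only [_root_.add_apply, ContinuousLinearMap.comp_apply, ContinuousLinearMap.flip_apply,
    map_add]
  ring

theorem bivectorBracket_jacobiator (hP : DifferentiableAt ℝ P x)
    (hskew : ∀ α β : StrongDual ℝ E, β (P x α) = -α (P x β))
    (hf : ContDiffAt ℝ 2 f x) (hg : ContDiffAt ℝ 2 g x) (hh : ContDiffAt ℝ 2 h x) :
    bivectorBracket P f (bivectorBracket P g h) x +
        bivectorBracket P g (bivectorBracket P h f) x +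
        bivectorBracket P h (bivectorBracket P f g) x =
      fderiv ℝ h x (fderiv ℝ P x (P x (fderiv ℝ f x)) (fderiv ℝ g x)) +
        fderiv ℝ f x (fderiv ℝ P x (P x (fderiv ℝ g x)) (fderiv ℝ h x)) +
        fderiv ℝ g x (fderiv ℝ P x (P x (fderiv ℝ h x)) (fderiv ℝ f x)) := by
  have diff {k : E → ℝ} (hk : ContDiffAt ℝ 2 k x) : DifferentiableAt ℝ (fderiv ℝ k) x :=
    (hk.fderiv_right (m := 1) (by norm_num)).differentiableAt one_ne_zero
  have symm {k : E → ℝ} (hk : ContDiffAt ℝ 2 k x) (u v : E) :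
      fderiv ℝ (fderiv ℝ k) x u v = fderiv ℝ (fderiv ℝ k) x v u :=
    hk.isSymmSndFDerivAt (by simp) u v
  have expand {k l : E → ℝ} (hk : ContDiffAt ℝ 2 k x) (hl : ContDiffAt ℝ 2 l x) (u : E) :
      fderiv ℝ (bivectorBracket P k l) x u =
        fderiv ℝ (fderiv ℝ l) x u (P x (fderiv ℝ k x)) +
          fderiv ℝ l x (fderiv ℝ P x u (fderiv ℝ k x)) -
          fderiv ℝ (fderiv ℝ k) x u (P x (fderiv ℝ l x)) := by
    rw [fderiv_bivectorBracket_apply hP (diff hk) (diff hl), hskew _ (fderiv ℝ l x),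
      ← sub_eq_add_neg]
  rw [bivectorBracket, bivectorBracket, bivectorBracket, expand hg hh, expand hh hf, expand hf hg,
    symm hf (P x (fderiv ℝ g x)), symm hg (P x (fderiv ℝ h x)), symm hh (P x (fderiv ℝ f x))]
  ring

set_option maxSynthPendingDepth 3 in
theorem bivectorBracket_smul_clm_jacobiator {a : E → ℝ} {L : E →L[ℝ] StrongDual ℝ E →L[ℝ] E}
    (ha : DifferentiableAt ℝ a x) (hskew : ∀ α β : StrongDual ℝ E, β (L x α) = -α (L x β))
    {α β γ : StrongDual ℝ E} (hα : fderiv ℝ f x = α) (hβ : fderiv ℝ g x = β)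
    (hγ : fderiv ℝ h x = γ)
    (hf : ContDiffAt ℝ 2 f x) (hg : ContDiffAt ℝ 2 g x) (hh : ContDiffAt ℝ 2 h x) :
    bivectorBracket (fun y => a y • L y) f (bivectorBracket (fun y => a y • L y) g h) x +
        bivectorBracket (fun y => a y • L y) g (bivectorBracket (fun y => a y • L y) h f) x +
        bivectorBracket (fun y => a y • L y) h (bivectorBracket (fun y => a y • L y) f g) x =
      a x * fderiv ℝ a x (γ (L x β) • L x α + α (L x γ) • L x β + β (L x α) • L x γ) +
        a x ^ 2 * (γ (L (L x α) β) + α (L (L x β) γ) + β (L (L x γ) α)) := by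
  have hskew' (μ ν : StrongDual ℝ E) : ν ((a x • L x) μ) = -μ ((a x • L x) ν) := by
    simp [hskew μ ν]
  rw [bivectorBracket_jacobiator (ha.fun_smul L.differentiableAt) hskew' hf hg hh, hα, hβ, hγ]
  simp only [fderiv_smul_clm_apply ha, _root_.add_apply, _root_.smul_apply, map_add, map_smul,
    smul_eq_mul]
  ring

end BivectorBracket

section CrossProduct

open Matrix

variable {R : Type*} [CommRing R]

lemma tripleProduct_smul_cross_cyclic (x u v w : Fin 3 → R) :
    (x ⬝ᵥ v ⨯₃ w) • (x ⨯₃ u) + (x ⬝ᵥ w ⨯₃ u) • (x ⨯₃ v) + (x ⬝ᵥ u ⨯₃ v) • (x ⨯₃ w) = 0 := by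
  have cramer : (x ⬝ᵥ v ⨯₃ w) • u + (x ⬝ᵥ w ⨯₃ u) • v + (x ⬝ᵥ u ⨯₃ v) • w =
      (u ⬝ᵥ v ⨯₃ w) • x := by
    simp_rw [cross_apply, vec3_dotProduct]
    ext i
    fin_cases i <;> dsimp <;> ring
  simp only [← map_smul, ← map_add, cramer]
  rw [map_smul, cross_self, smul_zero]

lemma cross_dot_cross_cyclic (x u v w : Fin 3 → R) :
    x ⨯₃ u ⬝ᵥ v ⨯₃ w + x ⨯₃ v ⬝ᵥ w ⨯₃ u + x ⨯₃ w ⬝ᵥ u ⨯₃ v = 0 := by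
  have move (p q : Fin 3 → R) : x ⨯₃ p ⬝ᵥ q = x ⬝ᵥ p ⨯₃ q := by
    rw [dotProduct_comm, triple_product_permutation]
  rw [move, move, move, ← dotProduct_add, ← dotProduct_add, jacobi_cross, dotProduct_zero]

end CrossProduct

section LiePoisson

open Matrix InnerProductSpace

local notation "ℝ³" => EuclideanSpace ℝ (Fin 3)

/-- The linear bivector field of the Kirillov–Poisson bracket on `ℝ³ ≃ 𝔰𝔲(2)*`: its contraction at
`x` sends a covector `α` to `x × α♯`, where `α♯` is the vector dual to `α`. -/
noncomputable def liePoissonTensor : ℝ³ →L[ℝ] StrongDual ℝ ℝ³ →L[ℝ] ℝ³ :=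
  LinearMap.toContinuousBilinearMap <|
    (crossProduct.compl₁₂ (WithLp.linearEquiv 2 ℝ (Fin 3 → ℝ)).toLinearMap
      ((WithLp.linearEquiv 2 ℝ (Fin 3 → ℝ)).toLinearMap ∘ₗ
        (toDual ℝ ℝ³).symm.toLinearEquiv.toLinearMap)).compr₂
      (WithLp.linearEquiv 2 ℝ (Fin 3 → ℝ)).symm.toLinearMap

lemma ofLp_liePoissonTensor (x : ℝ³) (α : StrongDual ℝ ℝ³) :
    (liePoissonTensor x α).ofLp = x.ofLp ⨯₃ ((toDual ℝ _).symm α).ofLp :=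
  rfl

lemma apply_liePoissonTensor (x : ℝ³) (α β : StrongDual ℝ ℝ³) :
    β (liePoissonTensor x α) =
      x.ofLp ⬝ᵥ ((toDual ℝ _).symm α).ofLp ⨯₃ ((toDual ℝ _).symm β).ofLp := by
  rw [← toDual_symm_apply (y := β), EuclideanSpace.inner_eq_star_dotProduct,
    ofLp_liePoissonTensor, star_trivial, dotProduct_comm, triple_product_permutation]

lemma liePoissonTensor_skew (x : ℝ³) (α β : StrongDual ℝ ℝ³) :
    β (liePoissonTensor x α) = -α (liePoissonTensor x β) := by
  rw [apply_liePoissonTensor, apply_liePoissonTensor, ← cross_anticomm, dotProduct_neg]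

lemma smul_liePoissonTensor_cyclic (x : ℝ³) (α β γ : StrongDual ℝ ℝ³) :
    γ (liePoissonTensor x β) • liePoissonTensor x α +
      α (liePoissonTensor x γ) • liePoissonTensor x β +
      β (liePoissonTensor x α) • liePoissonTensor x γ = 0 := by
  simp only [apply_liePoissonTensor]
  exact WithLp.ofLp_injective 2 (tripleProduct_smul_cross_cyclic _ _ _ _)

lemma liePoissonTensor_liePoissonTensor_cyclic (x : ℝ³) (α β γ : StrongDual ℝ ℝ³) :
    γ (liePoissonTensor (liePoissonTensor x α) β) +
      α (liePoissonTensor (liePoissonTensor x β) γ) +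
      β (liePoissonTensor (liePoissonTensor x γ) α) = 0 := by
  simp only [apply_liePoissonTensor, ofLp_liePoissonTensor]
  exact cross_dot_cross_cyclic _ _ _ _

theorem radialBracket_eq_bivectorBracket (a f g : ℝ³ → ℝ) :
    radialBracket a f g = bivectorBracket (fun x => a x • liePoissonTensor x) f g := by
  funext x
  simp [radialBracket, bivectorBracket, apply_liePoissonTensor, gradient,
    EuclideanSpace.inner_eq_star_dotProduct, dotProduct_comm]

theorem radialBracket_jacobi {a f g h : ℝ³ → ℝ} {x : ℝ³}
    (ha : DifferentiableAt ℝ a x) (hf : ContDiffAt ℝ 2 f x) (hg : ContDiffAt ℝ 2 g x)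
    (hh : ContDiffAt ℝ 2 h x) :
    radialBracket a f (radialBracket a g h) x + radialBracket a g (radialBracket a h f) x +
      radialBracket a h (radialBracket a f g) x = 0 := by
  simp only [radialBracket_eq_bivectorBracket]
  rw [bivectorBracket_smul_clm_jacobiator ha (liePoissonTensor_skew x) rfl rfl rfl hf hg hh,
    smul_liePoissonTensor_cyclic, liePoissonTensor_liePoissonTensor_cyclic, map_zero, mul_zero,
    mul_zero, add_zero]

end LiePoisson

theorem radialBracket_is_poisson_bracket_general
    {a : EuclideanSpace ℝ (Fin 3) → ℝ} (ha : Differentiable ℝ a) :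
    (∀ (c : ℝ) (f f' g : EuclideanSpace ℝ (Fin 3) → ℝ),
      Differentiable ℝ f → Differentiable ℝ f' →
      radialBracket a (c • f + f') g = c • radialBracket a f g + radialBracket a f' g) ∧
    (∀ (c : ℝ) (f g g' : EuclideanSpace ℝ (Fin 3) → ℝ),
      Differentiable ℝ g → Differentiable ℝ g' →
      radialBracket a f (c • g + g') = c • radialBracket a f g + radialBracket a f g') ∧
    (∀ f g : EuclideanSpace ℝ (Fin 3) → ℝ, radialBracket a f g = -radialBracket a g f) ∧
    (∀ f g h : EuclideanSpace ℝ (Fin 3) → ℝ, Differentiable ℝ f → Differentiable ℝ g →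
      radialBracket a (f * g) h = f * radialBracket a g h + g * radialBracket a f h) ∧
    (∀ f g h : EuclideanSpace ℝ (Fin 3) → ℝ,
      ContDiff ℝ 2 f → ContDiff ℝ 2 g → ContDiff ℝ 2 h →
      radialBracket a f (radialBracket a g h) + radialBracket a g (radialBracket a h f)
        + radialBracket a h (radialBracket a f g) = 0) := by
  refine ⟨fun c f f' g hf hf' => ?_, fun c f g g' hg hg' => ?_, fun f g => ?_,
    fun f g h hf hg => ?_, fun f g h hf hg hh => funext fun x =>
      radialBracket_jacobi (ha x) hf.contDiffAt hg.contDiffAt hh.contDiffAt⟩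
  all_goals simp only [radialBracket_eq_bivectorBracket]; funext x
  · exact bivectorBracket_smul_add_left c (hf x) (hf' x)
  · exact bivectorBracket_smul_add_right c (hg x) (hg' x)
  · simp [bivectorBracket, liePoissonTensor_skew x (fderiv ℝ f x)]
  · exact bivectorBracket_mul_left (hf x) (hg x)

/-- Let `a : ℝ³ → ℝ` be a smooth, radially symmetric function.  Then
`{f, g}(x) = a(x) · ⟨x, ∇f(x) × ∇g(x)⟩` is a Poisson bracket on `C^∞(ℝ³)`: it is
ℝ-bilinear and antisymmetric, satisfies the Leibniz rule `{fg, h} = f{g,h} + g{f,h}`, and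
satisfies the Jacobi identity `{f,{g,h}} + {g,{h,f}} + {h,{f,g}} = 0` for all smooth
`f, g, h`.  (This is the Poisson manifold `M_a` of the paper, the Kirillov–Poisson bracket
of `𝔰𝔲(2)*` rescaled by the radial function `a`.) -/
theorem radialBracket_is_poisson_bracket
    (a : EuclideanSpace ℝ (Fin 3) → ℝ)
    (ha : ContDiff ℝ (⊤ : ℕ∞) a)
    (hrad : ∀ x y : EuclideanSpace ℝ (Fin 3), ‖x‖ = ‖y‖ → a x = a y) :
    -- ℝ-linearity in the first argument
    (∀ (c : ℝ) (f f' g : EuclideanSpace ℝ (Fin 3) → ℝ),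
      ContDiff ℝ (⊤ : ℕ∞) f → ContDiff ℝ (⊤ : ℕ∞) f' → ContDiff ℝ (⊤ : ℕ∞) g →
      radialBracket a (c • f + f') g = c • radialBracket a f g + radialBracket a f' g) ∧
    -- ℝ-linearity in the second argument
    (∀ (c : ℝ) (f g g' : EuclideanSpace ℝ (Fin 3) → ℝ),
      ContDiff ℝ (⊤ : ℕ∞) f → ContDiff ℝ (⊤ : ℕ∞) g → ContDiff ℝ (⊤ : ℕ∞) g' →
      radialBracket a f (c • g + g') = c • radialBracket a f g + radialBracket a f g') ∧
    -- antisymmetry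
    (∀ f g : EuclideanSpace ℝ (Fin 3) → ℝ, ContDiff ℝ (⊤ : ℕ∞) f → ContDiff ℝ (⊤ : ℕ∞) g →
      radialBracket a f g = - radialBracket a g f) ∧
    -- Leibniz rule
    (∀ f g h : EuclideanSpace ℝ (Fin 3) → ℝ,
      ContDiff ℝ (⊤ : ℕ∞) f → ContDiff ℝ (⊤ : ℕ∞) g → ContDiff ℝ (⊤ : ℕ∞) h →
      radialBracket a (f * g) h = f * radialBracket a g h + g * radialBracket a f h) ∧
    -- Jacobi identity
    (∀ f g h : EuclideanSpace ℝ (Fin 3) → ℝ,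
      ContDiff ℝ (⊤ : ℕ∞) f → ContDiff ℝ (⊤ : ℕ∞) g → ContDiff ℝ (⊤ : ℕ∞) h →
      radialBracket a f (radialBracket a g h) + radialBracket a g (radialBracket a h f)
        + radialBracket a h (radialBracket a f g) = 0) := by
  have diff {f : EuclideanSpace ℝ (Fin 3) → ℝ} (hf : ContDiff ℝ (⊤ : ℕ∞) f) : Differentiable ℝ f :=
    hf.differentiable (by simp)
  have contDiff_two {f : EuclideanSpace ℝ (Fin 3) → ℝ} (hf : ContDiff ℝ (⊤ : ℕ∞) f) :
      ContDiff ℝ 2 f := hf.of_le (by norm_cast)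
  obtain ⟨smul_add_left, smul_add_right, antisymm, leibniz, jacobi⟩ :=
    radialBracket_is_poisson_bracket_general (diff ha)
  exact ⟨fun c f f' g hf hf' _ => smul_add_left c f f' g (diff hf) (diff hf'),
    fun c f g g' _ hg hg' => smul_add_right c f g g' (diff hg) (diff hg'),
    fun f g _ _ => antisymm f g,
    fun f g h hf hg _ => leibniz f g h (diff hf) (diff hg),
    fun f g h hf hg hh => jacobi f g h (contDiff_two hf) (contDiff_two hg) (contDiff_two hh)⟩
end
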